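/- arXiv:0710.2705 — 5 statements merged into one kernel-verified Lean document; each statement's English description precedes it below -/
import Mathlib

section
/- Let R > 1/2. Let M = M(n) = ⌈2^{nR}⌉ and let X₁, …, X_M be independent, each uniformly distributed on (ZMod 2)^n. Then there exists a constant δ > 0 such that for all sufficiently large n, the probability that some index j with 3 ≤ j ≤ M satisfies: X_jᵢ = X₁ᵢ for every coordinate i with X₁ᵢ = X₂ᵢ, is at least δ. (This is the converse part of Theorem 1: for the i.i.d. ensemble under the two-pirate averaging attack, at rates above 1/2 an innocent user is consistent with the forged copy with non-vanishing probability.) -/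
/-!
Fix the two pirates `x`, `y`, differing in `d` coordinates. The words consistent with them form a
subcube of size `2 ^ d` (`card_consistent`), so one innocent codeword is consistent with
probability `2 ^ (d - n)`. Complementing `y` sends `d` to `n - d`, hence `d ≥ n / 2` for at least
half of the pairs (`card_farPairs`), and for those the probability is at least
`p = 2 ^ (-n / 2)`. The other `M - 2` codewords are independent, so conditionally on such a pair
the probability that none is consistent is at most
`(1 - p) ^ (M - 2) ≤ exp (-p (M - 2))` (`card_exists_ge` and `card_cons_ge` do the counting).
As `M ≥ 2 ^ (n / 2)`, for `n ≥ 4` we have `p (M - 2) ≥ 1 - 2 p ≥ 1 / 2`, and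
`exp (-1 / 2) ≤ 2 / 3`. This gives the bound with `δ = 1 / 2 * 1 / 3 = 1 / 6`.
-/

open Finset Filter
open scoped Classical

/-- Number of users: `M(n) = ⌈2^{nR}⌉`. -/
noncomputable def Musers (R : ℝ) (n : ℕ) : ℕ := ⌈(2 : ℝ) ^ ((n : ℝ) * R)⌉₊

/-- `z` is consistent with the pair `(x₁, x₂)`: it agrees with `x₁` on every
coordinate where `x₁` and `x₂` agree (the unerased positions of the forged copy). -/
def Consistent {n : ℕ} (x₁ x₂ z : Fin n → ZMod 2) : Prop :=
  ∀ i : Fin n, x₁ i = x₂ i → z i = x₁ i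

/-- If a fraction at least `p` of `V` satisfies `P`, a uniform `v : Fin m → V` has some entry
satisfying `P` with probability at least `1 - (1 - p) ^ m`. -/
lemma card_exists_ge {V : Type*} [Fintype V] (m : ℕ) (P : V → Prop) (p : ℝ)
    (hp : p * Fintype.card V ≤ (univ.filter P).card) :
    (1 - (1 - p) ^ m) * (Fintype.card V : ℝ) ^ m ≤
      ((univ.filter fun v : Fin m → V => ∃ j, P (v j)).card : ℝ) := by
  have h1 := Finset.card_filter_add_card_filter_not (s := (univ : Finset (Fin m → V)))
    (fun v => ∃ j, P (v j))
  have h2 : (univ.filter fun v : Fin m → V => ¬ ∃ j, P (v j)) =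
      Fintype.piFinset fun _ => univ.filter fun z => ¬ P z := by
    ext v; simp
  have h3 := Finset.card_filter_add_card_filter_not (s := (univ : Finset V)) P
  rw [h2, Fintype.card_piFinset] at h1
  simp only [Finset.prod_const, Finset.card_univ, Fintype.card_fin, Fintype.card_fun] at h1 h3
  have h1' : ((univ.filter fun v : Fin m → V => ∃ j, P (v j)).card : ℝ) +
      ((univ.filter fun z => ¬ P z).card : ℝ) ^ m = (Fintype.card V : ℝ) ^ m := by
    exact_mod_cast h1
  have h3' : ((univ.filter P).card : ℝ) + ((univ.filter fun z => ¬ P z).card : ℝ) =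
      Fintype.card V := by
    exact_mod_cast h3
  have h4 : ((univ.filter fun z => ¬ P z).card : ℝ) ^ m ≤ ((1 - p) * Fintype.card V) ^ m := by
    apply pow_le_pow_left₀ (by positivity)
    linarith
  rw [mul_pow] at h4
  linarith

/-- Summing over the first two codewords: a family of pairs `G`, each of which leaves at least `a`
continuations satisfying the event, contributes at least `#G * a` codebooks. -/
lemma card_cons_ge {V : Type*} [Fintype V] (m : ℕ) (C : V → V → V → Prop) (G : Finset (V × V))
    (a : ℝ)
    (ha : ∀ q ∈ G, a ≤ ((univ.filter fun v : Fin m → V => ∃ j, C q.1 q.2 (v j)).card : ℝ)) :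
    G.card * a ≤ ((univ.filter fun ω : Fin (m + 2) → V =>
      ∃ j i₀ i₁ : Fin (m + 2), (i₀ : ℕ) = 0 ∧ (i₁ : ℕ) = 1 ∧ 2 ≤ (j : ℕ) ∧
        C (ω i₀) (ω i₁) (ω j)).card : ℝ) := by
  have h1 : (G.card : ℝ) * a ≤
      ((G.sigma fun q => univ.filter fun v : Fin m → V => ∃ j, C q.1 q.2 (v j)).card : ℝ) := by
    rw [Finset.card_sigma, Nat.cast_sum, ← nsmul_eq_mul]
    exact Finset.card_nsmul_le_sum _ _ _ ha
  refine h1.trans (Nat.cast_le.mpr ?_)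
  apply Finset.card_le_card_of_injOn
    (fun s => (Fin.cons s.1.1 (Fin.cons s.1.2 s.2 : Fin (m + 1) → V) : Fin (m + 2) → V))
  · rintro ⟨⟨x, y⟩, v⟩ h
    simp only [Finset.coe_sigma, Set.mem_sigma_iff, Finset.mem_coe, Finset.mem_filter,
      Finset.mem_univ, true_and] at h ⊢
    obtain ⟨-, j, hj⟩ := h
    refine ⟨j.succ.succ, 0, Fin.succ 0, by simp, by simp, by simp, ?_⟩
    simpa only [Fin.cons_zero, Fin.cons_succ] using hj
  · rintro ⟨⟨x, y⟩, v⟩ - ⟨⟨x', y'⟩, v'⟩ - h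
    simp only [Fin.cons_inj] at h
    obtain ⟨rfl, rfl, rfl⟩ := h
    rfl

lemma card_consistent {n : ℕ} (x y : Fin n → ZMod 2) :
    (univ.filter fun z => Consistent x y z).card = 2 ^ (univ.filter fun i => x i ≠ y i).card := by
  have h : (univ.filter fun z => Consistent x y z) =
      Fintype.piFinset fun i => if x i = y i then {x i} else univ := by
    ext z
    simp only [Finset.mem_filter, Finset.mem_univ, true_and, Fintype.mem_piFinset]
    refine forall_congr' fun i => ?_
    by_cases hi : x i = y i <;> simp [hi]
  rw [h, Fintype.card_piFinset, ← Finset.prod_const, Finset.prod_filter]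
  refine Finset.prod_congr rfl fun i _ => ?_
  by_cases hi : x i = y i <;> simp [hi, ZMod.card]

/-- The pairs of words at Hamming distance at least `n / 2`. -/
noncomputable def farPairs (n : ℕ) : Finset ((Fin n → ZMod 2) × (Fin n → ZMod 2)) :=
  univ.filter fun q => n ≤ 2 * (univ.filter fun i => q.1 i ≠ q.2 i).card

/-- Complementing the second word maps the pairs outside `farPairs n` injectively into it. -/
lemma card_farPairs (n : ℕ) :
    (Fintype.card (Fin n → ZMod 2)) ^ 2 ≤ 2 * (farPairs n).card := by
  have h1 := Finset.card_add_card_compl (farPairs n)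
  have h2 : (farPairs n)ᶜ.card ≤ (farPairs n).card := by
    apply Finset.card_le_card_of_injOn (fun q => (q.1, q.2 + 1))
    · rintro ⟨x, y⟩ h
      simp only [farPairs, Finset.coe_compl, Set.mem_compl_iff, Finset.mem_coe, Finset.mem_filter,
        Finset.mem_univ, true_and, not_le] at h ⊢
      have h3 := Finset.card_filter_add_card_filter_not (s := (univ : Finset (Fin n)))
        (fun i => x i ≠ y i)
      have h4 : (univ.filter fun i => ¬ x i ≠ y i) = univ.filter fun i => x i ≠ (y + 1) i := by
        ext i
        simp only [Finset.mem_filter, Finset.mem_univ, true_and, Pi.add_apply, Pi.one_apply]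
        generalize x i = a
        generalize y i = b
        revert a b
        decide
      rw [h4, Finset.card_univ, Fintype.card_fin] at h3
      omega
    · rintro ⟨x, y⟩ - ⟨x', y'⟩ - h
      simpa using h
  rw [Fintype.card_prod] at h1
  rw [sq]
  omega

/-- Converse part of Theorem 1 (two-pirate averaging attack, i.i.d. ensemble):
for any rate `R > 1/2` there is `δ > 0` such that, for all sufficiently large `n`,
the probability that some user `X_j` with `3 ≤ j ≤ M` agrees with `X₁` on every
coordinate where `X₁` and `X₂` agree is at least `δ`. -/
theorem averaging_attack_iid_converse (R : ℝ) (hR : 1 / 2 < R) :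
    ∃ δ > (0 : ℝ), ∃ N : ℕ, ∀ n ≥ N,
      δ ≤
        ((Finset.univ.filter
            (fun ω : Fin (Musers R n) → Fin n → ZMod 2 =>
              ∃ j i₀ i₁ : Fin (Musers R n),
                (i₀ : ℕ) = 0 ∧ (i₁ : ℕ) = 1 ∧ 2 ≤ (j : ℕ) ∧
                  Consistent (ω i₀) (ω i₁) (ω j))).card : ℝ) /
          (Fintype.card (Fin (Musers R n) → Fin n → ZMod 2) : ℝ) := by
  refine ⟨1 / 6, by norm_num, 4, fun n hn => ?_⟩
  have hn' : (4 : ℝ) ≤ n := by exact_mod_cast hn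
  have hM : (2 : ℝ) ^ ((n : ℝ) / 2) ≤ Musers R n := by
    refine le_trans ?_ (Nat.le_ceil _)
    apply Real.rpow_le_rpow_of_exponent_le (by norm_num)
    nlinarith
  have hr : (4 : ℝ) ≤ (2 : ℝ) ^ ((n : ℝ) / 2) := by
    calc (4 : ℝ) = (2 : ℝ) ^ (2 : ℝ) := by norm_num
      _ ≤ _ := Real.rpow_le_rpow_of_exponent_le (by norm_num) (by linarith)
  have hrr : (2 : ℝ) ^ ((n : ℝ) / 2) * (2 : ℝ) ^ ((n : ℝ) / 2) = 2 ^ n := by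
    rw [← Real.rpow_add (by norm_num), add_halves, Real.rpow_natCast]
  have hM2 : 2 ≤ Musers R n := by
    have : (2 : ℝ) ≤ Musers R n := by linarith
    exact_mod_cast this
  obtain ⟨m, hm⟩ := Nat.exists_eq_add_of_le' hM2
  rw [hm] at hM ⊢
  push_cast at hM
  have hcV : (Fintype.card (Fin n → ZMod 2) : ℝ) = 2 ^ n := by simp [ZMod.card]
  have hfar := card_farPairs n
  have hfar' : (Fintype.card (Fin n → ZMod 2) : ℝ) ^ 2 ≤ 2 * (farPairs n).card := by
    exact_mod_cast hfar
  -- `r = 2 ^ (n / 2)`, so that `r⁻¹` bounds below the probability that one word is consistent.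
  set r : ℝ := (2 : ℝ) ^ ((n : ℝ) / 2) with hrdef
  have hr0 : 0 < r := by linarith
  have key := card_cons_ge m (Consistent (n := n)) (farPairs n)
    ((1 - (1 - r⁻¹) ^ m) * (Fintype.card (Fin n → ZMod 2) : ℝ) ^ m) (by
      rintro ⟨x, y⟩ hq
      refine card_exists_ge m (fun z => Consistent x y z) r⁻¹ ?_
      rw [hcV, card_consistent, ← hrr, inv_mul_cancel_left₀ hr0.ne', Nat.cast_pow, Nat.cast_ofNat,
        ← Real.rpow_natCast, hrdef]
      apply Real.rpow_le_rpow_of_exponent_le (by norm_num)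
      have h : n ≤ 2 * (univ.filter fun i => x i ≠ y i).card := by simpa [farPairs] using hq
      have h' : (n : ℝ) ≤ 2 * ((univ.filter fun i => x i ≠ y i).card : ℝ) := by exact_mod_cast h
      linarith)
  have hri : r⁻¹ ≤ 1 / 4 := by
    rw [inv_eq_one_div]
    exact one_div_le_one_div_of_le (by norm_num) hr
  have hpow : (1 - r⁻¹) ^ m ≤ 2 / 3 := by
    have e1 : 1 - r⁻¹ ≤ Real.exp (-r⁻¹) := by linarith [Real.add_one_le_exp (-r⁻¹)]
    have e2 : (1 - r⁻¹) ^ m ≤ Real.exp (-(m * r⁻¹)) := by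
      calc (1 - r⁻¹) ^ m ≤ Real.exp (-r⁻¹) ^ m := pow_le_pow_left₀ (by linarith) e1 m
        _ = _ := by rw [← Real.exp_nat_mul]; ring_nf
    have e3 : 1 / 2 ≤ m * r⁻¹ := by
      rw [← div_eq_mul_inv, le_div_iff₀ hr0]
      linarith
    have e4 : 3 / 2 ≤ Real.exp (m * r⁻¹) := by linarith [Real.add_one_le_exp (m * r⁻¹)]
    calc (1 - r⁻¹) ^ m ≤ (Real.exp (m * r⁻¹))⁻¹ := by rw [← Real.exp_neg]; exact e2
      _ ≤ (3 / 2)⁻¹ := inv_anti₀ (by norm_num) e4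
      _ = 2 / 3 := by norm_num
  have hV0 : 0 < (Fintype.card (Fin n → ZMod 2) : ℝ) := by rw [hcV]; positivity
  have hcard : (Fintype.card (Fin (m + 2) → Fin n → ZMod 2) : ℝ) =
      (Fintype.card (Fin n → ZMod 2) : ℝ) ^ m * (Fintype.card (Fin n → ZMod 2) : ℝ) ^ 2 := by
    rw [← pow_add, Fintype.card_fun, Fintype.card_fin, Nat.cast_pow]
  rw [hcard, le_div_iff₀ (by positivity)]
  refine le_trans ?_ key
  generalize (Fintype.card (Fin n → ZMod 2) : ℝ) = v at *
  calc 1 / 6 * (v ^ m * v ^ 2) = (v ^ 2 / 2) * (1 / 3 * v ^ m) := by ring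
    _ ≤ (farPairs n).card * ((1 - (1 - r⁻¹) ^ m) * v ^ m) := by
      gcongr
      · linarith
      · linarith
end

section
/- Fix an integer t ≥ 2 and a rate R with R < 2^{1−t}. Let M = M(n) = ⌈2^{nR}⌉ and let X₁, …, X_M be independent, each uniformly distributed on (ZMod 2)^n. Then the probability that some index j with t+1 ≤ j ≤ M satisfies: X_jᵢ = X₁ᵢ for every coordinate i at which X₁ᵢ = X₂ᵢ = ⋯ = X_tᵢ, tends to 0 as n → ∞. (This is Corollary 1: the rate 1/2^{t−1} is MD-achievable for fingerprinting under the averaging attack with a coalition of size t, treating every position where the t pirates disagree as an erasure.) -/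
/-!
Call a coordinate *unerased* if the `t` pirates agree there; a coordinate is unerased with
probability `p = 2^{1-t}`, independently over the coordinates. The number `E` of unerased
coordinates concentrates at `np`, and an innocent codeword agrees with `X₁` on all of them with
conditional probability `2^{-E}`. The plain union bound `M (1 - p/2)^n` only reaches the rate
`-log₂ (1 - p/2) < p`, so the event `E ≤ qn` is split off, where `R < q < p`:

* `P(E ≤ qn)` decays exponentially by Chernoff's bound, `P(E ≤ qn) ≤ 𝔼 exp (u (qn - E))`;
* for an innocent `j`,
  `P(E ≥ qn, j agrees) ≤ 2^{-qn} 𝔼 [2^E ; j agrees] = 2^{-qn}`, which is summed over `M ≈ 2^{nR}`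
  users.

Both expectations are products over the coordinates, hence `n`-th powers of sums over a single
column `c : Fin M → ZMod 2` (`sum_prod_columns`). These column sums follow from one fact: among
the columns on which the pirates agree, flipping the bit of a further user shows that
this user agrees with the pirates on exactly half of them (`two_mul_card_agree`).
`card_bad_le` combines the two bounds, and `exponent_lt_one` makes the Chernoff exponent
negative for a suitable `u`.
-/

open Finset Filter
open scoped Classical

/-! ### Counting columns on which the pirates agree -/

/-- The column `c` (the bits of all `M` users at one coordinate) is constant on the first `k`
users, with common value the bit of the user `i₀`. -/
def Agree {M : ℕ} (i₀ : Fin M) (k : ℕ) (c : Fin M → ZMod 2) : Prop :=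
  ∀ a : Fin M, (a : ℕ) < k → c a = c i₀

/-- A user `j` outside the first `k` agrees with them on exactly half of the columns on which
they agree among themselves: flipping the bit of `j` is an involution exchanging the two halves. -/
lemma two_mul_card_agree {M : ℕ} (i₀ j : Fin M) (k : ℕ) (h0 : (i₀ : ℕ) < k) (hj : k ≤ (j : ℕ)) :
    2 * (univ.filter fun c : Fin M → ZMod 2 => Agree i₀ k c ∧ c j = c i₀).card
      = (univ.filter fun c : Fin M → ZMod 2 => Agree i₀ k c).card := by
  have hij : i₀ ≠ j := by rintro rfl; omega
  have flip : ∀ x y : ZMod 2, x + 1 = y ↔ x ≠ y := by decide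
  have inv : ∀ x : ZMod 2, x + 1 + 1 = x := by decide
  have upd : ∀ (c : Fin M → ZMod 2) (x : ZMod 2),
      Agree i₀ k (Function.update c j x) ↔ Agree i₀ k c := by
    intro c x
    refine forall_congr' fun a => imp_congr_right fun ha => ?_
    have : a ≠ j := by rintro rfl; omega
    rw [Function.update_of_ne this, Function.update_of_ne hij]
  have hcard : (univ.filter fun c : Fin M → ZMod 2 => Agree i₀ k c ∧ c j = c i₀).card
      = (univ.filter fun c : Fin M → ZMod 2 => Agree i₀ k c ∧ ¬ c j = c i₀).card := by
    refine card_bij' (fun c _ => Function.update c j (c j + 1))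
      (fun c _ => Function.update c j (c j + 1)) ?_ ?_ ?_ ?_
    · intro c hc
      simp only [mem_filter, mem_univ, true_and] at hc ⊢
      refine ⟨(upd _ _).2 hc.1, ?_⟩
      rw [Function.update_self, Function.update_of_ne hij, flip]
      exact fun h => h hc.2
    · intro c hc
      simp only [mem_filter, mem_univ, true_and] at hc ⊢
      refine ⟨(upd _ _).2 hc.1, ?_⟩
      rw [Function.update_self, Function.update_of_ne hij, flip]
      exact hc.2
    · intro c _
      simp [inv]
    · intro c _
      simp [inv]
  rw [← card_filter_add_card_filter_not (s := univ.filter fun c : Fin M → ZMod 2 => Agree i₀ k c)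
    (fun c => c j = c i₀), filter_filter, filter_filter, ← hcard]
  ring

lemma card_agree {M : ℕ} (i₀ : Fin M) (h0 : (i₀ : ℕ) = 0) (k : ℕ) (hk : k + 1 ≤ M) :
    2 ^ k * (univ.filter fun c : Fin M → ZMod 2 => Agree i₀ (k + 1) c).card = 2 ^ M := by
  induction k with
  | zero =>
    have : ∀ c : Fin M → ZMod 2, Agree i₀ (0 + 1) c := by
      intro c a ha
      have : a = i₀ := Fin.ext (by omega)
      rw [this]
    simp [this, ZMod.card]
  | succ k ih =>
    rw [← ih (by omega), ← two_mul_card_agree i₀ ⟨k + 1, by omega⟩ (k + 1) (by omega) le_rfl,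
      pow_succ, mul_assoc]
    congr 3
    ext c
    simp only [mem_filter, mem_univ, true_and]
    constructor
    · exact fun h => ⟨fun a ha => h a (by omega), h _ (by simp)⟩
    · rintro ⟨h1, h2⟩ a ha
      rcases Nat.lt_succ_iff_lt_or_eq.1 ha with h | h
      · exact h1 a h
      · rw [← h2]
        congr 1
        exact Fin.ext h

/-! ### Column sums -/

/-- The columns of a uniformly random codebook are independent and uniformly distributed. -/
lemma sum_prod_columns {M n : ℕ} (f : (Fin M → ZMod 2) → ℝ) :
    ∑ ω : Fin M → Fin n → ZMod 2, ∏ i, f (fun a => ω a i) = (∑ c, f c) ^ n := by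
  rw [Fintype.sum_pow]
  exact Fintype.sum_equiv (Equiv.piComm fun _ _ => ZMod 2) _ _ fun ω => rfl

lemma card_agree_real {M t : ℕ} (ht : 1 ≤ t) (i₀ : Fin M) (h0 : (i₀ : ℕ) = 0) (hM : t ≤ M) :
    ((univ.filter fun c : Fin M → ZMod 2 => Agree i₀ t c).card : ℝ)
      = 1 / 2 ^ (t - 1) * 2 ^ M := by
  obtain ⟨k, rfl⟩ : ∃ k, t = k + 1 := ⟨t - 1, by omega⟩
  have h := card_agree i₀ h0 k hM
  have h' : (2 : ℝ) ^ k * ((univ.filter fun c : Fin M → ZMod 2 => Agree i₀ (k + 1) c).card : ℝ)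
      = 2 ^ M := by exact_mod_cast h
  rw [← h', Nat.add_sub_cancel]
  field_simp

lemma card_not_agree_real {M : ℕ} (t : ℕ) (i₀ : Fin M) :
    ((univ.filter fun c : Fin M → ZMod 2 => ¬ Agree i₀ t c).card : ℝ)
      = 2 ^ M - ((univ.filter fun c : Fin M → ZMod 2 => Agree i₀ t c).card : ℝ) := by
  have h := card_filter_add_card_filter_not (s := (univ : Finset (Fin M → ZMod 2)))
    (fun c => Agree i₀ t c)
  have h' : ((univ.filter fun c : Fin M → ZMod 2 => Agree i₀ t c).card : ℝ)
      + ((univ.filter fun c : Fin M → ZMod 2 => ¬ Agree i₀ t c).card : ℝ) = 2 ^ M := by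
    rw [← Nat.cast_add, h]
    simp [ZMod.card]
  linarith

/-- The moment generating function of the indicator that a column is unerased. -/
lemma sum_erasure_weight {M t : ℕ} (ht : 1 ≤ t) (i₀ : Fin M) (h0 : (i₀ : ℕ) = 0) (hM : t ≤ M)
    (x : ℝ) :
    ∑ c : Fin M → ZMod 2, (if Agree i₀ t c then x else 1)
      = 2 ^ M * (1 - 1 / 2 ^ (t - 1) * (1 - x)) := by
  rw [sum_ite, sum_const, sum_const, nsmul_eq_mul, nsmul_eq_mul, card_not_agree_real,
    card_agree_real ht i₀ h0 hM]
  ring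

/-- Weighting the unerased columns on which `j` agrees by `2` compensates for the probability
`1/2` of agreement, so the average weight is `1`. -/
lemma sum_agreement_weight {M t : ℕ} (i₀ j : Fin M) (h0 : (i₀ : ℕ) < t) (hj : t ≤ (j : ℕ)) :
    ∑ c : Fin M → ZMod 2, (if Agree i₀ t c then (if c j = c i₀ then (2 : ℝ) else 0) else 1)
      = 2 ^ M := by
  have h : (2 : ℝ) * ((univ.filter fun c : Fin M → ZMod 2 => Agree i₀ t c ∧ c j = c i₀).card : ℝ)
      = ((univ.filter fun c : Fin M → ZMod 2 => Agree i₀ t c).card : ℝ) := by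
    exact_mod_cast two_mul_card_agree i₀ j t h0 hj
  rw [sum_ite, sum_ite, sum_const, sum_const, sum_const, filter_filter, nsmul_eq_mul,
    nsmul_eq_mul, nsmul_eq_mul, card_not_agree_real, ← h]
  ring

/-! ### Bounding the error probability -/

/-- Chernoff's bound for few unerased coordinates, plus the union bound over the innocent users
when there are at least `qn` of them. -/
lemma card_bad_le {M n t : ℕ} (ht : 1 ≤ t) (i₀ : Fin M) (h0 : (i₀ : ℕ) = 0) (hM : t ≤ M)
    {q u : ℝ} (hu : 0 ≤ u) :
    ((univ.filter fun ω : Fin M → Fin n → ZMod 2 => ∃ j : Fin M, t ≤ (j : ℕ) ∧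
        ∀ i : Fin n, Agree i₀ t (fun a => ω a i) → ω j i = ω i₀ i).card : ℝ)
      ≤ (2 ^ M) ^ n * ((Real.exp (u * q) * (1 - 1 / 2 ^ (t - 1) * (1 - Real.exp (-u)))) ^ n
        + M * ((2 : ℝ) ^ (-q)) ^ n) := by
  set f : (Fin M → ZMod 2) → ℝ := fun c =>
    Real.exp (u * q) * (if Agree i₀ t c then Real.exp (-u) else 1) with hf
  set g : Fin M → (Fin M → ZMod 2) → ℝ := fun j c =>
    (2 : ℝ) ^ (-q) * (if Agree i₀ t c then (if c j = c i₀ then (2 : ℝ) else 0) else 1) with hg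
  have hf0 : ∀ c, 0 ≤ f c := by
    intro c; simp only [hf]; split_ifs <;> positivity
  have hg0 : ∀ j c, 0 ≤ g j c := by
    intro j c; simp only [hg]; split_ifs <;> positivity
  have hpt : ∀ ω : Fin M → Fin n → ZMod 2, (∃ j : Fin M, t ≤ (j : ℕ) ∧
        ∀ i : Fin n, Agree i₀ t (fun a => ω a i) → ω j i = ω i₀ i) →
      1 ≤ (∏ i, f (fun a => ω a i))
        + ∑ j ∈ univ.filter (fun j : Fin M => t ≤ (j : ℕ)), ∏ i, g j (fun a => ω a i) := by
    rintro ω ⟨j, hj, hω⟩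
    set e := (univ.filter fun i : Fin n => Agree i₀ t (fun a => ω a i)).card with he
    have hF0 : 0 ≤ ∏ i, f (fun a => ω a i) := prod_nonneg fun i _ => hf0 _
    have hG0 : ∀ j, 0 ≤ ∏ i, g j (fun a => ω a i) := fun j => prod_nonneg fun i _ => hg0 _ _
    rcases le_total (e : ℝ) (q * n) with h | h
    · have : ∏ i, f (fun a => ω a i) = Real.exp (u * (q * n - e)) := by
        simp only [hf]
        rw [prod_mul_distrib, prod_ite, prod_const, prod_const, prod_const_one, mul_one, ← he,
          card_univ, Fintype.card_fin, ← Real.exp_nat_mul, ← Real.exp_nat_mul, ← Real.exp_add]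
        congr 1
        ring
      have h1 : 1 ≤ ∏ i, f (fun a => ω a i) := by
        rw [this]
        exact Real.one_le_exp (mul_nonneg hu (by linarith))
      have := sum_nonneg (s := univ.filter (fun j : Fin M => t ≤ (j : ℕ))) fun j _ => hG0 j
      linarith
    · have : ∏ i, g j (fun a => ω a i) = (2 : ℝ) ^ (e - q * n) := by
        have h2 : ∀ i, g j (fun a => ω a i)
            = (2 : ℝ) ^ (-q) * (if Agree i₀ t (fun a => ω a i) then (2 : ℝ) else 1) := by
          intro i
          simp only [hg]
          split_ifs with ha hb
          · rfl
          · exact absurd (hω i ha) hb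
          · rfl
        rw [prod_congr rfl fun i _ => h2 i, prod_mul_distrib, prod_ite, prod_const, prod_const,
          prod_const_one, mul_one, ← he, card_univ, Fintype.card_fin, ← Real.rpow_mul_natCast
          (by norm_num), ← Real.rpow_natCast 2 e, ← Real.rpow_add (by norm_num)]
        congr 1
        ring
      have h1 : 1 ≤ ∏ i, g j (fun a => ω a i) := by
        rw [this]
        exact Real.one_le_rpow (by norm_num) (by linarith)
      have := single_le_sum (s := univ.filter (fun j : Fin M => t ≤ (j : ℕ)))
        (fun j _ => hG0 j) (by simpa using hj : j ∈ univ.filter (fun j : Fin M => t ≤ (j : ℕ)))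
      linarith
  have hcount : ((univ.filter fun ω : Fin M → Fin n → ZMod 2 => ∃ j : Fin M, t ≤ (j : ℕ) ∧
        ∀ i : Fin n, Agree i₀ t (fun a => ω a i) → ω j i = ω i₀ i).card : ℝ)
      ≤ ∑ ω : Fin M → Fin n → ZMod 2, ((∏ i, f (fun a => ω a i))
        + ∑ j ∈ univ.filter (fun j : Fin M => t ≤ (j : ℕ)), ∏ i, g j (fun a => ω a i)) := by
    rw [card_eq_sum_ones, Nat.cast_sum, sum_filter]
    refine sum_le_sum fun ω _ => ?_
    split_ifs with h
    · simpa using hpt ω h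
    · exact add_nonneg (prod_nonneg fun i _ => hf0 _)
        (sum_nonneg fun j _ => prod_nonneg fun i _ => hg0 _ _)
  refine hcount.trans ?_
  rw [sum_add_distrib, sum_comm, sum_prod_columns, mul_add]
  refine add_le_add (le_of_eq ?_) ?_
  · simp only [hf]
    rw [← mul_sum, sum_erasure_weight ht i₀ h0 hM, ← mul_pow]
    congr 1
    ring
  · have : ∀ j ∈ univ.filter (fun j : Fin M => t ≤ (j : ℕ)),
        ∑ ω : Fin M → Fin n → ZMod 2, ∏ i, g j (fun a => ω a i)
          ≤ (2 ^ M) ^ n * ((2 : ℝ) ^ (-q)) ^ n := by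
      intro j hj
      rw [sum_prod_columns]
      simp only [hg]
      rw [← mul_sum, sum_agreement_weight i₀ j (by omega) (by simpa using hj), mul_pow, mul_comm]
    refine (sum_le_card_nsmul _ _ _ this).trans ?_
    rw [nsmul_eq_mul, mul_left_comm]
    have hc : ((univ.filter (fun j : Fin M => t ≤ (j : ℕ))).card : ℝ) ≤ M := by
      exact_mod_cast (card_le_univ _).trans (by simp)
    gcongr

/-- The Chernoff base is below `1` for a suitable `u`: it is at most `exp (uq - p (1 - exp (-u)))`,
and `1 - exp (-u) ≥ u / (1 + u)`, so any `u > 0` with `q (1 + u) < p` works. -/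
lemma exponent_lt_one {p q : ℝ} (hq : 0 < q) (hqp : q < p) :
    ∃ u : ℝ, 0 ≤ u ∧ Real.exp (u * q) * (1 - p * (1 - Real.exp (-u))) < 1 := by
  have hu : 0 < (p - q) / (2 * q) := by
    have := sub_pos.2 hqp
    positivity
  have hqu : q * (1 + (p - q) / (2 * q)) < p := by
    have : q * (1 + (p - q) / (2 * q)) = (p + q) / 2 := by
      field_simp
      ring
    linarith
  generalize (p - q) / (2 * q) = u at hu hqu
  refine ⟨u, hu.le, ?_⟩
  have h1 : Real.exp (-u) ≤ 1 / (1 + u) := by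
    rw [Real.exp_neg, one_div]
    have := Real.add_one_le_exp u
    gcongr
    linarith
  have h2 : u * q < p * (1 - Real.exp (-u)) := by
    have h3 : u * q < p * (1 - 1 / (1 + u)) := by
      have : p * (1 - 1 / (1 + u)) = u * p / (1 + u) := by
        field_simp
        ring
      rw [this, lt_div_iff₀ (by positivity)]
      nlinarith
    have := mul_le_mul_of_nonneg_left h1 (hq.trans hqp).le
    linarith
  calc Real.exp (u * q) * (1 - p * (1 - Real.exp (-u)))
      ≤ Real.exp (u * q) * Real.exp (-(p * (1 - Real.exp (-u)))) := by
        gcongr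
        exact Real.one_sub_le_exp_neg _
    _ < 1 := by
        rw [← Real.exp_add, Real.exp_lt_one_iff]
        linarith

/-! ### Exponential decay below the rate `2^{1-t}` -/

/-- Corollary 1: under the `t`-pirate averaging attack with the erasure-based
minimum-distance decoder (erasing every position where the `t` pirates disagree),
for any rate `R < 1/2^{t-1}` the probability that some innocent codeword `X_j`
(`t+1 ≤ j ≤ M`) agrees with `X₁` at every coordinate where all the pirates
`X₁, …, X_t` agree tends to `0` as `n → ∞`. -/
theorem averaging_attack_t_pirates_achievability (t : ℕ) (ht : 2 ≤ t) (R : ℝ)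
    (hR : R < 1 / 2 ^ (t - 1)) :
    Tendsto
      (fun n : ℕ =>
        ((Finset.univ.filter
            (fun ω : Fin (Musers R n) → Fin n → ZMod 2 =>
              ∃ j i₀ : Fin (Musers R n),
                (i₀ : ℕ) = 0 ∧ t ≤ (j : ℕ) ∧
                  ∀ i : Fin n,
                    (∀ a : Fin (Musers R n), (a : ℕ) < t → ω a i = ω i₀ i) →
                      ω j i = ω i₀ i)).card : ℝ) /
          (Fintype.card (Fin (Musers R n) → Fin n → ZMod 2) : ℝ))
      atTop (nhds 0) := by
  have hp1 : (1 : ℝ) / 2 ^ (t - 1) ≤ 1 := by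
    rw [div_le_one (by positivity)]
    exact one_le_pow₀ (by norm_num)
  have hp0 : (0 : ℝ) < 1 / 2 ^ (t - 1) := by positivity
  -- A threshold strictly between the rate and the fraction of unerased coordinates; taking
  -- the maximum with `0` keeps it positive when `R` is negative.
  obtain ⟨q, hRq, hqp⟩ := exists_between (max_lt hR hp0)
  have hq : 0 < q := (le_max_right _ _).trans_lt hRq
  replace hRq : R < q := (le_max_left _ _).trans_lt hRq
  obtain ⟨u, hu, hlt⟩ := exponent_lt_one hq hqp
  set α : ℝ := Real.exp (u * q) * (1 - 1 / 2 ^ (t - 1) * (1 - Real.exp (-u))) with hα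
  have hα0 : 0 ≤ α := by
    have h1 := Real.exp_pos (-u)
    have h2 : 0 ≤ 1 - 1 / 2 ^ (t - 1) * (1 - Real.exp (-u)) := by nlinarith
    positivity
  have hb0 : (0 : ℝ) ≤ 2 ^ (-q) := by positivity
  have hb1 : (2 : ℝ) ^ (-q) < 1 := Real.rpow_lt_one_of_one_lt_of_neg (by norm_num) (by linarith)
  have hc1 : (2 : ℝ) ^ (R - q) < 1 :=
    Real.rpow_lt_one_of_one_lt_of_neg (by norm_num) (by linarith)
  have hlim : Tendsto (fun n : ℕ => α ^ n + (((2 : ℝ) ^ (R - q)) ^ n + ((2 : ℝ) ^ (-q)) ^ n))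
      atTop (nhds 0) := by
    simpa using (tendsto_pow_atTop_nhds_zero_of_lt_one hα0 hlt).add
      ((tendsto_pow_atTop_nhds_zero_of_lt_one (by positivity) hc1).add
        (tendsto_pow_atTop_nhds_zero_of_lt_one hb0 hb1))
  refine squeeze_zero (fun n => by positivity) (fun n => ?_) hlim
  have hMle : (Musers R n : ℝ) * ((2 : ℝ) ^ (-q)) ^ n
      ≤ ((2 : ℝ) ^ (R - q)) ^ n + ((2 : ℝ) ^ (-q)) ^ n := by
    have h1 : (Musers R n : ℝ) ≤ (2 : ℝ) ^ ((n : ℝ) * R) + 1 :=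
      (Nat.ceil_lt_add_one (by positivity)).le
    have h2 : (2 : ℝ) ^ ((n : ℝ) * R) * ((2 : ℝ) ^ (-q)) ^ n = ((2 : ℝ) ^ (R - q)) ^ n := by
      rw [← Real.rpow_mul_natCast (by norm_num), ← Real.rpow_mul_natCast (by norm_num),
        ← Real.rpow_add (by norm_num)]
      congr 1
      ring
    calc (Musers R n : ℝ) * ((2 : ℝ) ^ (-q)) ^ n
        ≤ ((2 : ℝ) ^ ((n : ℝ) * R) + 1) * ((2 : ℝ) ^ (-q)) ^ n := by gcongr
      _ = _ := by rw [add_mul, h2, one_mul]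
  refine le_trans ?_ (add_le_add_right hMle _)
  generalize Musers R n = M
  have hcard : (Fintype.card (Fin M → Fin n → ZMod 2) : ℝ) = (2 ^ M) ^ n := by
    simp only [Fintype.card_fun, Fintype.card_fin, ZMod.card]
    push_cast
    rw [← pow_mul, ← pow_mul, mul_comm]
  rw [hcard, div_le_iff₀' (by positivity)]
  rcases le_or_gt M t with hMt | hMt
  · -- There are no innocent users, so the event is empty.
    rw [filter_false_of_mem, card_empty, Nat.cast_zero]
    · positivity
    · rintro ω - ⟨j, -, -, hj, -⟩
      have := j.isLt
      omega
  · have hM0 : 0 < M := by omega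
    refine le_trans ?_ (card_bad_le (by omega) (⟨0, hM0⟩ : Fin M) rfl hMt.le hu)
    refine Nat.cast_le.2 (card_le_card fun ω hω => ?_)
    simp only [mem_filter, mem_univ, true_and] at hω ⊢
    obtain ⟨j, i₀, h0, hj, h⟩ := hω
    obtain rfl : i₀ = ⟨0, hM0⟩ := Fin.ext h0
    exact ⟨j, hj, h⟩
end

section
/- Fix positive integers k and n and two distinct message vectors u₁ ≠ u₂ in (ZMod 2)^k. Let G be a uniformly random k × n matrix over ZMod 2 and let K be a uniformly random vector in (ZMod 2)^n, independent of G. Then the pair of codewords (vecMul u₁ G + K, vecMul u₂ G + K) is uniformly distributed on (ZMod 2)^n × (ZMod 2)^n; in particular the two codewords are statistically independent, each uniform on (ZMod 2)^n. (This is Lemma 2 on the coset-code ensemble, used in the proof of Theorem 5.) -/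
/-!
The map `(G, K) ↦ (u₁ G + K, u₂ G + K)` is additive. It is onto: choose a coordinate `i` with
`u₁ i ≠ u₂ i`, let `G` be supported on row `i` so that `u₁ G - u₂ G` is the required difference,
and correct by `K`. All fibres of a surjective homomorphism of finite groups have the same
cardinality, so the image of the uniform distribution is uniform. The marginals follow in the
same way from the surjectivity of the two coordinate maps.
-/

open Finset
open scoped Classical

/-- A surjective homomorphism of finite additive groups pushes the uniform distribution forward
to the uniform distribution. -/
theorem card_fiber_div_card_of_surjective {A B : Type*} [AddGroup A] [AddGroup B]
    [Fintype A] [Fintype B] (f : A →+ B) (hf : Function.Surjective f) (b : B)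
    (p : A → Prop) [DecidablePred p] (hp : ∀ a, p a ↔ f a = b) :
    ((Finset.univ.filter p).card : ℝ) / (Fintype.card A : ℝ) = (Fintype.card B : ℝ)⁻¹ := by
  have hfib : ∀ c : B, (Finset.univ.filter fun a => f a = c).card
      = (Finset.univ.filter p).card := by
    intro c
    rw [Finset.filter_congr fun a _ => hp a]
    exact AddMonoidHom.card_fiber_eq_of_mem_range f (hf c) (hf b)
  have hcard : Fintype.card A = Fintype.card B * (Finset.univ.filter p).card := by
    rw [← Finset.card_univ, Finset.card_eq_sum_card_fiberwise (f := f) (t := Finset.univ)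
      (fun _ _ => by simp), Finset.sum_congr rfl fun c _ => hfib c]
    simp
  have hA : (Fintype.card A : ℝ) ≠ 0 := by
    exact_mod_cast Fintype.card_ne_zero
  rw [hcard] at hA ⊢
  push_cast at hA ⊢
  have hB := left_ne_zero_of_mul hA
  have hF := right_ne_zero_of_mul hA
  field_simp

/-- The encoding map `(G, K) ↦ u G + K` of a fixed message `u`, as an additive homomorphism. -/
def cosetEncode {k n : ℕ} (u : Fin k → ZMod 2) :
    Matrix (Fin k) (Fin n) (ZMod 2) × (Fin n → ZMod 2) →+ (Fin n → ZMod 2) where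
  toFun GK := Matrix.vecMul u GK.1 + GK.2
  map_zero' := by simp
  map_add' x y := by
    simp only [Prod.fst_add, Prod.snd_add, Matrix.vecMul_add]
    abel

theorem cosetEncode_surjective {k n : ℕ} (u : Fin k → ZMod 2) :
    Function.Surjective (cosetEncode (n := n) u) :=
  fun v => ⟨(0, v), by simp [cosetEncode]⟩

theorem cosetEncode_prod_surjective {k n : ℕ} {u₁ u₂ : Fin k → ZMod 2} (hu : u₁ ≠ u₂) :
    Function.Surjective ((cosetEncode (n := n) u₁).prod (cosetEncode u₂)) := by
  rintro ⟨v₁, v₂⟩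
  obtain ⟨i, hi⟩ := Function.ne_iff.mp hu
  have hd : u₁ i - u₂ i ≠ 0 := sub_ne_zero.mpr hi
  -- The matrix whose only nonzero row is row `i`, equal to `(u₁ i - u₂ i)⁻¹ • (v₁ - v₂)`.
  let w : Fin n → ZMod 2 := (u₁ i - u₂ i)⁻¹ • (v₁ - v₂)
  let G : Matrix (Fin k) (Fin n) (ZMod 2) := Matrix.vecMulVec (Pi.single i 1) w
  have hG : ∀ u : Fin k → ZMod 2, Matrix.vecMul u G = u i • w := by
    intro u
    simp [G, Matrix.vecMul_vecMulVec]
  have hw : u₁ i • w - u₂ i • w = v₁ - v₂ := by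
    rw [← sub_smul, smul_inv_smul₀ hd]
  refine ⟨(G, v₁ - u₁ i • w), Prod.ext ?_ ?_⟩
  · change Matrix.vecMul u₁ G + (v₁ - u₁ i • w) = v₁
    rw [hG]
    abel
  · change Matrix.vecMul u₂ G + (v₁ - u₁ i • w) = v₂
    rw [hG, show v₁ = u₁ i • w - u₂ i • w + v₂ by rw [hw]; abel]
    abel

/-- Lemma 2 on Gallager's coset-code ensemble: for two distinct messages
`u₁ ≠ u₂` in `(ZMod 2)^k`, with `G` a uniformly random `k × n` generator matrix over
`ZMod 2` and `K` an independent uniformly random secret key in `(ZMod 2)^n`, the pair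
of codewords `(u₁·G + K, u₂·G + K)` is uniform on `(ZMod 2)^n × (ZMod 2)^n`; in
particular the two codewords are statistically independent, each uniform. -/
theorem coset_code_pair_uniform_indep (k n : ℕ) (hk : 0 < k) (hn : 0 < n)
    (u₁ u₂ : Fin k → ZMod 2) (hu : u₁ ≠ u₂) :
    (∀ v₁ v₂ : Fin n → ZMod 2,
      ((Finset.univ.filter
          (fun GK : Matrix (Fin k) (Fin n) (ZMod 2) × (Fin n → ZMod 2) =>
            Matrix.vecMul u₁ GK.1 + GK.2 = v₁ ∧ Matrix.vecMul u₂ GK.1 + GK.2 = v₂)).card : ℝ) /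
        (Fintype.card (Matrix (Fin k) (Fin n) (ZMod 2) × (Fin n → ZMod 2)) : ℝ)
        = ((2 : ℝ) ^ n)⁻¹ * ((2 : ℝ) ^ n)⁻¹) ∧
    (∀ v₁ : Fin n → ZMod 2,
      ((Finset.univ.filter
          (fun GK : Matrix (Fin k) (Fin n) (ZMod 2) × (Fin n → ZMod 2) =>
            Matrix.vecMul u₁ GK.1 + GK.2 = v₁)).card : ℝ) /
        (Fintype.card (Matrix (Fin k) (Fin n) (ZMod 2) × (Fin n → ZMod 2)) : ℝ)
        = ((2 : ℝ) ^ n)⁻¹) ∧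
    (∀ v₂ : Fin n → ZMod 2,
      ((Finset.univ.filter
          (fun GK : Matrix (Fin k) (Fin n) (ZMod 2) × (Fin n → ZMod 2) =>
            Matrix.vecMul u₂ GK.1 + GK.2 = v₂)).card : ℝ) /
        (Fintype.card (Matrix (Fin k) (Fin n) (ZMod 2) × (Fin n → ZMod 2)) : ℝ)
        = ((2 : ℝ) ^ n)⁻¹) := by
  have hc : (Fintype.card (Fin n → ZMod 2) : ℝ) = 2 ^ n := by
    simp [ZMod.card]
  refine ⟨fun v₁ v₂ => ?_, fun v₁ => ?_, fun v₂ => ?_⟩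
  · refine (card_fiber_div_card_of_surjective _ (cosetEncode_prod_surjective hu) (v₁, v₂) _
      fun _ => Prod.mk_inj.symm).trans ?_
    rw [Fintype.card_prod, Nat.cast_mul, hc, mul_inv]
  · refine (card_fiber_div_card_of_surjective _ (cosetEncode_surjective u₁) v₁ _
      fun _ => Iff.rfl).trans ?_
    rw [hc]
  · refine (card_fiber_div_card_of_surjective _ (cosetEncode_surjective u₂) v₂ _
      fun _ => Iff.rfl).trans ?_
    rw [hc]
end

section
/- Let H be an l × n parity-check matrix over ZMod 2 and let x₁, x₂ ∈ (ZMod 2)^n be two codewords, i.e., H.mulVec x₁ = 0 and H.mulVec x₂ = 0. For each row index j, let S_j = {i : H j i = 1 and x₁ᵢ ≠ x₂ᵢ} be the set of neighbors of check node j lying in the difference set V_d = {i : x₁ᵢ ≠ x₂ᵢ}. Then S_j has even cardinality for every j; consequently, every check node that has at least one neighbor in V_d has at least two neighbors in V_d, i.e., V_d is a stopping set of the Tanner graph of the code. (This is Proposition 1.) -/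
/-! Over `ZMod 2` the indicator of `H j i = 1 ∧ x₁ i ≠ x₂ i` equals `H j i * (x₁ i - x₂ i)`.
Summing over `i`, the cardinality of `S_j` reduces mod 2 to the `j`-th entry of `H x₁ - H x₂`,
which vanishes. A nonempty set of even cardinality has at least two elements. -/

open Finset
open scoped Classical

/-- Proposition 1: for a binary linear code with parity-check matrix `H` and two
codewords `x₁, x₂`, let `V_d = {i : x₁ᵢ ≠ x₂ᵢ}`. For each check node `j`, the set
`S_j` of neighbors of `j` lying in `V_d` has even cardinality; consequently every
check node with at least one neighbor in `V_d` has at least two neighbors in `V_d`,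
i.e. `V_d` is a stopping set of the Tanner graph. -/
theorem difference_set_is_stopping_set {l n : ℕ}
    (H : Matrix (Fin l) (Fin n) (ZMod 2)) (x₁ x₂ : Fin n → ZMod 2)
    (h₁ : H.mulVec x₁ = 0) (h₂ : H.mulVec x₂ = 0) :
    (∀ j : Fin l,
      Even (Finset.univ.filter (fun i : Fin n => H j i = 1 ∧ x₁ i ≠ x₂ i)).card) ∧
    (∀ j : Fin l,
      (∃ i : Fin n, H j i = 1 ∧ x₁ i ≠ x₂ i) →
        2 ≤ (Finset.univ.filter (fun i : Fin n => H j i = 1 ∧ x₁ i ≠ x₂ i)).card) := by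
  have even_card : ∀ j : Fin l,
      Even (Finset.univ.filter (fun i : Fin n => H j i = 1 ∧ x₁ i ≠ x₂ i)).card := by
    intro j
    rw [← ZMod.natCast_eq_zero_iff_even, Finset.natCast_card_filter]
    have bit : ∀ a b c : ZMod 2, (a = 1 ∧ b ≠ c → (1 : ZMod 2) = a * b - a * c) ∧
        (¬ (a = 1 ∧ b ≠ c) → (0 : ZMod 2) = a * b - a * c) := by decide
    calc
      _ = ∑ i, (H j i * x₁ i - H j i * x₂ i) := by
        refine Finset.sum_congr rfl fun i _ => ?_
        split_ifs with h
        · exact (bit _ _ _).1 h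
        · exact (bit _ _ _).2 h
      _ = H.mulVec x₁ j - H.mulVec x₂ j := by
        rw [Finset.sum_sub_distrib]
        rfl
      _ = 0 := by simp [h₁, h₂]
  refine ⟨even_card, fun j ⟨i, hi⟩ => ?_⟩
  have pos : 0 < (Finset.univ.filter (fun i : Fin n => H j i = 1 ∧ x₁ i ≠ x₂ i)).card :=
    Finset.card_pos.mpr ⟨i, Finset.mem_filter.mpr ⟨Finset.mem_univ i, hi⟩⟩
  obtain ⟨k, hk⟩ := even_card j
  omega
end

section
/- Let ε > 0 and let m(n), l(n) be sequences of positive integers with m(n) ≥ 1 and m(n) + ⌈εn⌉ ≤ l(n) for all n. For each n, let N_r(n) denote the number of l(n) × m(n) matrices over ZMod 2 of rank r. Then the conditional probability, for a uniformly random l(n) × m(n) matrix over ZMod 2, that its rank is strictly less than m(n) − 1 given that its rank is strictly less than m(n), tends to 0 as n → ∞; equivalently, (2^{l(n)m(n)} − N_{m(n)}(n) − N_{m(n)−1}(n)) / (2^{l(n)m(n)} − N_{m(n)}(n)) → 0. (This is the key estimate, equation (12) ff., in the achievability proof of Theorem 2: the submatrix H_E of the random parity-check matrix restricted to the erased columns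 has rank at least |E|−1 with probability tending to 1.) -/
/-!
The proof is a second-moment argument. For an `l × m` matrix `A` over `ZMod 2` let `X(A)` be the
number of nonzero `v` with `A v = 0`, so that `X(A) + 1 = 2 ^ (m - rank A)`. Any `k` linearly
independent vectors are killed by exactly a fraction `2 ^ (-lk)` of all matrices
(`card_annihilator`); two distinct nonzero vectors over `ZMod 2` are linearly independent, so the
expectations of `X` and `X (X - 1)` are `q / 2 ^ l` and `q (q - 1) / 4 ^ l` with `q = 2 ^ m - 1`.

The indicator of `rank A < m - 1` is at most `X (X - 1) / 6`, and the indicator of `rank A < m` is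
at least `X - X (X - 1) / 2` (Bonferroni). Comparing expectations, the conditional probability is
at most `2 ^ m / 2 ^ l ≤ 2 ^ (-⌈ε n⌉)` (`defect_two_le`), which tends to `0`.
-/

open Filter

/-- `Nrank l m r` is the number of `l × m` matrices over `ZMod 2` whose rank is `r`. -/
noncomputable def Nrank (l m r : ℕ) : ℕ :=
  Nat.card {A : Matrix (Fin l) (Fin m) (ZMod 2) // A.rank = r}

/-- The nonzero kernel vectors of a matrix over `ZMod 2`. -/
def kerVecs {l m : ℕ} (A : Matrix (Fin l) (Fin m) (ZMod 2)) : Finset (Fin m → ZMod 2) :=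
  {v | v ≠ 0 ∧ A.mulVec v = 0}

/-- Linearly independent vectors can be sent to arbitrary vectors by some matrix, so the
evaluation map at `b` is onto and its kernel has index `2 ^ (l * k)`. -/
lemma card_annihilator {l m k : ℕ} (b : Fin k → Fin m → ZMod 2)
    (hb : LinearIndependent (ZMod 2) b) :
    Nat.card {A : Matrix (Fin l) (Fin m) (ZMod 2) // ∀ i, A.mulVec (b i) = 0} * (2 ^ l) ^ k
      = 2 ^ (l * m) := by
  let Φ : Matrix (Fin l) (Fin m) (ZMod 2) →+ (Fin k → Fin l → ZMod 2) :=
    { toFun := fun A i => A.mulVec (b i)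
      map_zero' := by ext; simp
      map_add' := by intro A B; ext; simp [Matrix.add_mulVec] }
  have hsurj : Function.Surjective Φ := by
    intro w
    obtain ⟨g, hg⟩ := LinearMap.exists_leftInverse_of_injective
      (Finsupp.linearCombination (ZMod 2) b) (LinearMap.ker_eq_bot.2 hb)
    refine ⟨LinearMap.toMatrix' ((Finsupp.linearCombination (ZMod 2) w).comp g), ?_⟩
    funext i
    have h : g (b i) = Finsupp.single i 1 := by
      simpa using LinearMap.congr_fun hg (Finsupp.single i 1)
    change Matrix.mulVec _ (b i) = w i
    rw [LinearMap.toMatrix'_mulVec]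
    simp [h]
  have h := Φ.ker.card_mul_index
  rw [AddSubgroup.index_ker, AddMonoidHom.range_eq_top.2 hsurj, AddSubgroup.card_top] at h
  have h1 : Nat.card Φ.ker =
      Nat.card {A : Matrix (Fin l) (Fin m) (ZMod 2) // ∀ i, A.mulVec (b i) = 0} :=
    Nat.card_congr (Equiv.subtypeEquivRight fun A => by
      rw [AddMonoidHom.mem_ker]; exact funext_iff)
  rw [h1] at h
  simpa [Nat.card_eq_fintype_card, Matrix, ← pow_mul, mul_comm] using h

lemma card_kerVecs {l m : ℕ} (A : Matrix (Fin l) (Fin m) (ZMod 2)) :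
    (kerVecs A).card + 1 = 2 ^ (m - A.rank) := by
  have h0 : insert 0 (kerVecs A) = Finset.univ.filter (fun v => A.mulVec v = 0) := by
    ext v
    by_cases hv : v = 0 <;> simp [kerVecs, hv]
  have h1 : (0 : Fin m → ZMod 2) ∉ kerVecs A := by simp [kerVecs]
  rw [← Finset.card_insert_of_notMem h1, h0, ← Fintype.card_subtype, ← Nat.card_eq_fintype_card]
  have h2 : Nat.card {v // A.mulVec v = 0} = Nat.card (LinearMap.ker A.mulVecLin) :=
    Nat.card_congr (Equiv.subtypeEquivRight fun v => by simp)
  have h3 := A.mulVecLin.finrank_range_add_finrank_ker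
  have h4 : Module.finrank (ZMod 2) (LinearMap.ker A.mulVecLin) = m - A.rank := by
    rw [Module.finrank_fin_fun] at h3
    change A.rank + _ = m at h3
    omega
  rw [h2, Module.natCard_eq_pow_finrank (K := ZMod 2), h4, Nat.card_zmod]

lemma linearIndependent_pair {m : ℕ} {u v : Fin m → ZMod 2} (hu : u ≠ 0) (hv : v ≠ 0)
    (huv : u ≠ v) : LinearIndependent (ZMod 2) ![u, v] := by
  rw [LinearIndependent.pair_iff]
  have h2 : ∀ x : ZMod 2, x = 0 ∨ x = 1 := by decide
  intro s t h
  rcases h2 s with rfl | rfl <;> rcases h2 t with rfl | rfl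
  · simp
  · simp [hv] at h
  · simp [hu] at h
  · refine absurd ?_ huv
    have h' : u + v = 0 := by simpa using h
    rw [eq_neg_of_add_eq_zero_left h']
    exact ZModModule.neg_eq_self v

lemma card_nonzero (m : ℕ) :
    (Finset.univ.filter (fun v : Fin m → ZMod 2 => v ≠ 0)).card = 2 ^ m - 1 := by
  rw [Finset.filter_ne', Finset.card_erase_of_mem (Finset.mem_univ _)]
  simp

/-- First moment of the number of nonzero kernel vectors. -/
lemma sum_card_kerVecs (l m : ℕ) :
    (∑ A : Matrix (Fin l) (Fin m) (ZMod 2), (kerVecs A).card) * 2 ^ l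
      = (2 ^ m - 1) * 2 ^ (l * m) := by
  classical
  have h := Finset.sum_card_bipartiteAbove_eq_sum_card_bipartiteBelow
    (s := (Finset.univ : Finset (Matrix (Fin l) (Fin m) (ZMod 2))))
    (t := Finset.univ.filter (fun v : Fin m → ZMod 2 => v ≠ 0)) (fun A v => A.mulVec v = 0)
  have h1 : ∀ A : Matrix (Fin l) (Fin m) (ZMod 2),
      Finset.bipartiteAbove (fun A v => A.mulVec v = 0)
        (Finset.univ.filter (fun v : Fin m → ZMod 2 => v ≠ 0)) A = kerVecs A := by
    intro A; ext v; simp [Finset.bipartiteAbove, kerVecs]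
  simp only [h1] at h
  rw [h, Finset.sum_mul, ← card_nonzero, ← smul_eq_mul, ← Finset.sum_const]
  refine Finset.sum_congr rfl fun v hv => ?_
  have hv' : v ≠ 0 := by simpa using hv
  have := card_annihilator (l := l) ![v]
    ((LinearIndependent.of_subsingleton (R := ZMod 2) (v := ![v]) 0 (by simpa using hv')))
  rw [← this, pow_one, Finset.bipartiteBelow, Nat.card_eq_fintype_card, Fintype.card_subtype]
  simp

/-- Second factorial moment of the number of nonzero kernel vectors. -/
lemma sum_offDiag_kerVecs (l m : ℕ) :
    (∑ A : Matrix (Fin l) (Fin m) (ZMod 2), (kerVecs A).offDiag.card) * (2 ^ l) ^ 2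
      = ((2 ^ m - 1) * (2 ^ m - 1) - (2 ^ m - 1)) * 2 ^ (l * m) := by
  classical
  have h := Finset.sum_card_bipartiteAbove_eq_sum_card_bipartiteBelow
    (s := (Finset.univ : Finset (Matrix (Fin l) (Fin m) (ZMod 2))))
    (t := (Finset.univ.filter (fun v : Fin m → ZMod 2 => v ≠ 0)).offDiag)
    (fun A p => A.mulVec p.1 = 0 ∧ A.mulVec p.2 = 0)
  have h1 : ∀ A : Matrix (Fin l) (Fin m) (ZMod 2),
      Finset.bipartiteAbove (fun A p => A.mulVec p.1 = 0 ∧ A.mulVec p.2 = 0)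
        (Finset.univ.filter (fun v : Fin m → ZMod 2 => v ≠ 0)).offDiag A
        = (kerVecs A).offDiag := by
    intro A; ext v; simp [Finset.bipartiteAbove, kerVecs, Finset.mem_offDiag]; tauto
  simp only [h1] at h
  rw [h, Finset.sum_mul, ← card_nonzero, ← Finset.offDiag_card, ← smul_eq_mul, ← Finset.sum_const]
  refine Finset.sum_congr rfl fun p hp => ?_
  obtain ⟨hu, hv, huv⟩ : p.1 ≠ 0 ∧ p.2 ≠ 0 ∧ p.1 ≠ p.2 := by
    simpa [Finset.mem_offDiag] using hp
  have := card_annihilator (l := l) ![p.1, p.2] (linearIndependent_pair hu hv huv)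
  rw [← this, Finset.bipartiteBelow, Nat.card_eq_fintype_card, Fintype.card_subtype]
  simp [Fin.forall_fin_two]

lemma Nrank_eq_sum (l m r : ℕ) :
    (Nrank l m r : ℝ)
      = ∑ A : Matrix (Fin l) (Fin m) (ZMod 2), if A.rank = r then (1 : ℝ) else 0 := by
  classical
  rw [Nrank, Nat.card_eq_fintype_card, Fintype.card_subtype]
  simp

lemma pow_eq_sum (l m : ℕ) :
    (2 : ℝ) ^ (l * m) = ∑ _A : Matrix (Fin l) (Fin m) (ZMod 2), (1 : ℝ) := by
  have : Fintype.card (Matrix (Fin l) (Fin m) (ZMod 2)) = 2 ^ (l * m) := by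
    rw [← Nat.card_eq_fintype_card]
    simp [Nat.card_eq_fintype_card, Matrix, ← pow_mul, mul_comm]
  rw [Finset.sum_const, Finset.card_univ, this]
  simp

lemma cast_offDiag {l m : ℕ} (A : Matrix (Fin l) (Fin m) (ZMod 2)) :
    ((kerVecs A).offDiag.card : ℝ) = (kerVecs A).card * ((kerVecs A).card - 1) := by
  rw [Finset.offDiag_card, Nat.cast_sub (Nat.le_mul_self _)]
  push_cast; ring

/-- Bounds on the indicators of `rank A < m - 1` and `rank A < m`, each written through the
indicators of the two excluded ranks, by the factorial moments of the kernel count. -/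
lemma pointwise_bounds {l m : ℕ} (hm : 1 ≤ m) (A : Matrix (Fin l) (Fin m) (ZMod 2)) :
    0 ≤ (1 : ℝ) - (if A.rank = m then 1 else 0) - (if A.rank = m - 1 then 1 else 0) ∧
    6 * ((1 : ℝ) - (if A.rank = m then 1 else 0) - (if A.rank = m - 1 then 1 else 0))
      ≤ (kerVecs A).offDiag.card ∧
    ((kerVecs A).card : ℝ) - (kerVecs A).offDiag.card / 2
      ≤ 1 - (if A.rank = m then 1 else 0) := by
  rw [cast_offDiag]
  have hX := card_kerVecs A
  have hr : A.rank ≤ m := A.rank_le_width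
  by_cases h1 : A.rank = m
  · have : (kerVecs A).card = 0 := by simpa [h1] using hX
    have h2 : m ≠ m - 1 := by omega
    simp [this, h1, h2]
  by_cases h2 : A.rank = m - 1
  · have h3 : m - A.rank = 1 := by omega
    have : (kerVecs A).card = 1 := by rw [h3] at hX; omega
    have h4 : ¬ (m - 1 = m) := by omega
    norm_num [this, h2, h4]
  · have h3 : 2 ^ 2 ≤ 2 ^ (m - A.rank) := Nat.pow_le_pow_right (by norm_num) (by omega)
    have h4 : 3 ≤ (kerVecs A).card := by omega
    have h5 : (3 : ℝ) ≤ (kerVecs A).card := by exact_mod_cast h4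
    simp only [h1, h2, if_false]
    refine ⟨by norm_num, by nlinarith, by nlinarith⟩

/-- The count of matrices with rank `< m - 1` is at most `2 ^ m / 2 ^ l` times the count of those
with rank `< m`. -/
lemma defect_two_le {l m : ℕ} (hm : 1 ≤ m) (hml : m ≤ l) :
    0 ≤ (2 : ℝ) ^ (l * m) - Nrank l m m - Nrank l m (m - 1) ∧
    0 ≤ (2 : ℝ) ^ (l * m) - Nrank l m m ∧
    (2 : ℝ) ^ (l * m) - Nrank l m m - Nrank l m (m - 1)
      ≤ (2 ^ m / 2 ^ l) * ((2 : ℝ) ^ (l * m) - Nrank l m m) := by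
  have S1 := sum_card_kerVecs l m
  have S2 := sum_offDiag_kerVecs l m
  have hpow : 1 ≤ 2 ^ m := Nat.one_le_two_pow
  have hE0 : 0 ≤ (2 : ℝ) ^ (l * m) - Nrank l m m - Nrank l m (m - 1) := by
    rw [pow_eq_sum, Nrank_eq_sum, Nrank_eq_sum, ← Finset.sum_sub_distrib,
      ← Finset.sum_sub_distrib]
    exact Finset.sum_nonneg fun A _ => (pointwise_bounds hm A).1
  have hE : 6 * ((2 : ℝ) ^ (l * m) - Nrank l m m - Nrank l m (m - 1)) ≤
      ((∑ A : Matrix (Fin l) (Fin m) (ZMod 2), (kerVecs A).offDiag.card : ℕ) : ℝ) := by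
    rw [pow_eq_sum, Nrank_eq_sum, Nrank_eq_sum, ← Finset.sum_sub_distrib,
      ← Finset.sum_sub_distrib, Finset.mul_sum, Nat.cast_sum]
    exact Finset.sum_le_sum fun A _ => (pointwise_bounds hm A).2.1
  have hD : ((∑ A : Matrix (Fin l) (Fin m) (ZMod 2), (kerVecs A).card : ℕ) : ℝ) -
      ((∑ A : Matrix (Fin l) (Fin m) (ZMod 2), (kerVecs A).offDiag.card : ℕ) : ℝ) / 2
      ≤ (2 : ℝ) ^ (l * m) - Nrank l m m := by
    rw [pow_eq_sum, Nrank_eq_sum, ← Finset.sum_sub_distrib, Nat.cast_sum, Nat.cast_sum,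
      Finset.sum_div, ← Finset.sum_sub_distrib]
    exact Finset.sum_le_sum fun A _ => (pointwise_bounds hm A).2.2
  have hN : (0 : ℝ) ≤ Nrank l m (m - 1) := Nat.cast_nonneg _
  refine ⟨hE0, by linarith, ?_⟩
  generalize (∑ A : Matrix (Fin l) (Fin m) (ZMod 2), (kerVecs A).card) = s1 at *
  generalize (∑ A : Matrix (Fin l) (Fin m) (ZMod 2), (kerVecs A).offDiag.card) = s2 at *
  have T1 : (s1 : ℝ) * 2 ^ l = (2 ^ m - 1) * 2 ^ (l * m) := by
    have := congrArg (Nat.cast (R := ℝ)) S1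
    push_cast [Nat.cast_sub hpow] at this
    exact this
  have T2 : (s2 : ℝ) * (2 ^ l) ^ 2 = ((2 ^ m - 1) * (2 ^ m - 1) - (2 ^ m - 1)) * 2 ^ (l * m) := by
    have := congrArg (Nat.cast (R := ℝ)) S2
    push_cast [Nat.cast_sub hpow, Nat.cast_sub (Nat.le_mul_self (2 ^ m - 1))] at this
    exact this
  have hP1 : (1 : ℝ) ≤ 2 ^ m := one_le_pow₀ (by norm_num)
  have hPL : (2 : ℝ) ^ m ≤ 2 ^ l := pow_le_pow_right₀ (by norm_num) hml
  have hM : (0 : ℝ) < 2 ^ (l * m) := by positivity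
  generalize (2 : ℝ) ^ (l * m) - Nrank l m m - Nrank l m (m - 1) = E at *
  generalize (2 : ℝ) ^ (l * m) - Nrank l m m = D at *
  generalize (2 : ℝ) ^ (l * m) = M at *
  generalize (2 : ℝ) ^ m = P at *
  generalize (2 : ℝ) ^ l = L at *
  have hL : 0 < L := by linarith
  have hqM : 0 ≤ (P - 1) * M := mul_nonneg (by linarith) hM.le
  -- With `P = 2 ^ m` and `L = 2 ^ l`: `e1` bounds the second moment by `(P - 1) * P`, and `e2`
  -- uses `P ≤ L` to absorb the Bonferroni correction into half of the first moment.
  have e1 : 6 * E * L ^ 2 ≤ (P - 1) * M * P := by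
    have := mul_le_mul_of_nonneg_right hE (sq_nonneg L)
    nlinarith
  have e2 : (P - 1) * M * L ≤ 2 * (D * L ^ 2) := by
    have := mul_le_mul_of_nonneg_right hD (sq_nonneg L)
    have h3 : (s1 : ℝ) * L ^ 2 = (P - 1) * M * L := by rw [← T1]; ring
    have h4 : (P - 1) * M * P ≤ (P - 1) * M * L := mul_le_mul_of_nonneg_left hPL hqM
    nlinarith
  rw [div_mul_eq_mul_div, le_div_iff₀ hL]
  have e3 : 6 * E * L ^ 3 ≤ 2 * (P * D) * L ^ 2 := by
    have a1 := mul_le_mul_of_nonneg_right e1 hL.le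
    have a2 := mul_le_mul_of_nonneg_left e2 (by linarith : (0 : ℝ) ≤ P)
    nlinarith
  have e4 : 3 * (E * L) ≤ P * D := by
    refine le_of_mul_le_mul_right ?_ (by positivity : 0 < 2 * L ^ 2)
    linarith
  have e5 : 0 ≤ E * L := mul_nonneg hE0 hL.le
  linarith

/-- Key estimate in the achievability proof of Theorem 2: if `m(n) ≥ 1` and
`m(n) + ⌈εn⌉ ≤ l(n)` with `ε > 0`, then for a uniformly random `l(n) × m(n)` matrix
over `ZMod 2` the conditional probability that its rank is `< m(n) - 1` given that it
is `< m(n)` tends to `0`; equivalently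
`(2^{lm} - N_m - N_{m-1}) / (2^{lm} - N_m) → 0` as `n → ∞`. -/
theorem rank_deficiency_conditional_prob_tendsto_zero (ε : ℝ) (hε : 0 < ε)
    (m l : ℕ → ℕ) (hm : ∀ n, 1 ≤ m n) (hml : ∀ n, m n + ⌈ε * (n : ℝ)⌉₊ ≤ l n) :
    Tendsto
      (fun n : ℕ =>
        ((2 : ℝ) ^ (l n * m n) - (Nrank (l n) (m n) (m n) : ℝ)
            - (Nrank (l n) (m n) (m n - 1) : ℝ)) /
          ((2 : ℝ) ^ (l n * m n) - (Nrank (l n) (m n) (m n) : ℝ)))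
      atTop (nhds 0) := by
  have hlim : Tendsto (fun n : ℕ => (1 / 2 : ℝ) ^ ⌈ε * (n : ℝ)⌉₊) atTop (nhds 0) :=
    (tendsto_pow_atTop_nhds_zero_of_lt_one (by norm_num) (by norm_num)).comp
      (tendsto_nat_ceil_atTop.comp
        (tendsto_natCast_atTop_atTop.const_mul_atTop hε))
  refine squeeze_zero (fun n => ?_) (fun n => ?_) hlim
  · obtain ⟨h0, h1, -⟩ := defect_two_le (hm n) ((Nat.le_add_right _ _).trans (hml n))
    exact div_nonneg h0 h1
  · obtain ⟨h0, h1, h2⟩ := defect_two_le (hm n) ((Nat.le_add_right _ _).trans (hml n))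
    refine (div_le_of_le_mul₀ h1 (by positivity) h2).trans ?_
    rw [div_le_iff₀ (by positivity), one_div, inv_pow, inv_mul_eq_div, le_div_iff₀ (by positivity),
      ← pow_add]
    exact pow_le_pow_right₀ (by norm_num) (hml n)
end
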